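/- arXiv:1910.03411 — 2 statements merged into one kernel-verified Lean document; each statement's English description precedes it below -/
import Mathlib

section
/- Let n ∈ ℕ and let F : 𝒜₀(ℝⁿ) × ℝⁿ → ℝ be moderate. Assume that F satisfies the zeroth-order negligibility estimate: for every compact K ⊂ ℝⁿ and every m ∈ ℕ there is q ∈ ℕ such that for all φ ∈ 𝒜_q(ℝⁿ), sup_{x ∈ K} |F(φ_ε, x)| = O(ε^m) as ε → 0⁺. Then F is negligible, i.e., the corresponding estimates hold for all derivatives ∂_x^k F as well. -/
open MeasureTheory Filter Topology

noncomputable section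

namespace Colombeau

/-- `φ ∈ 𝒟(ℝⁿ)`: smooth compactly supported function. -/
def IsTestFunction (n : ℕ) (φ : (Fin n → ℝ) → ℝ) : Prop :=
  ContDiff ℝ (⊤ : ℕ∞) φ ∧ HasCompactSupport φ

/-- `φ ∈ 𝒜₀(ℝⁿ)`: test function with integral one. -/
def IsA0 (n : ℕ) (φ : (Fin n → ℝ) → ℝ) : Prop :=
  IsTestFunction n φ ∧ ∫ x, φ x = 1

/-- `φ ∈ 𝒜_q(ℝⁿ)`: vanishing moments up to order `q`. -/
def IsAq (n q : ℕ) (φ : (Fin n → ℝ) → ℝ) : Prop :=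
  IsA0 n φ ∧ ∀ i : Fin n → ℕ, 1 ≤ ∑ j, i j → ∑ j, i j ≤ q →
    ∫ x, (∏ j, x j ^ i j) * φ x = 0

/-- the scaled mollifier `φ_ε(x) = ε⁻ⁿ φ(x/ε)`. -/
def scaled (n : ℕ) (φ : (Fin n → ℝ) → ℝ) (ε : ℝ) : (Fin n → ℝ) → ℝ :=
  fun x => (ε ^ n)⁻¹ * φ (ε⁻¹ • x)

/-- partial derivative `∂_i`. -/
def partialD {n : ℕ} (i : Fin n) (f : (Fin n → ℝ) → ℝ) : (Fin n → ℝ) → ℝ :=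
  fun x => fderiv ℝ f x (Pi.single i 1)

/-- multi-index derivative `∂^k = ∂₁^{k₁} ⋯ ∂_n^{k_n}`. -/
def multiD {n : ℕ} (k : Fin n → ℕ) (f : (Fin n → ℝ) → ℝ) : (Fin n → ℝ) → ℝ :=
  (List.finRange n).foldl (fun g i => (partialD i)^[k i] g) f

/-- Moderate functions of the basic space. -/
def Moderate (n : ℕ) (F : ((Fin n → ℝ) → ℝ) → (Fin n → ℝ) → ℝ) : Prop :=
  ∀ K : Set (Fin n → ℝ), IsCompact K → ∀ k : Fin n → ℕ,
    ∃ N : ℕ, ∀ φ, IsAq n N φ →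
      ∃ C > 0, ∀ᶠ ε in 𝓝[>] (0:ℝ), ∀ x ∈ K,
        |multiD k (F (scaled n φ ε)) x| ≤ C * ε ^ (-(N:ℤ))

/-- Negligible functions of the basic space. -/
def Negligible (n : ℕ) (F : ((Fin n → ℝ) → ℝ) → (Fin n → ℝ) → ℝ) : Prop :=
  ∀ K : Set (Fin n → ℝ), IsCompact K → ∀ k : Fin n → ℕ, ∀ m : ℕ,
    ∃ q : ℕ, ∀ φ, IsAq n q φ →
      ∃ C > 0, ∀ᶠ ε in 𝓝[>] (0:ℝ), ∀ x ∈ K,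
        |multiD k (F (scaled n φ ε)) x| ≤ C * ε ^ m


lemma IsAq.mono {n p q : ℕ} (hpq : p ≤ q) {φ : (Fin n → ℝ) → ℝ} (h : IsAq n q φ) :
    IsAq n p φ :=
  ⟨h.1, fun i h1 h2 => h.2 i h1 (h2.trans hpq)⟩

lemma IsA0.scaled {n : ℕ} {φ : (Fin n → ℝ) → ℝ} (h : IsA0 n φ) {ε : ℝ} (hε : 0 < ε) :
    IsA0 n (scaled n φ ε) := by
  refine ⟨⟨?_, ?_⟩, ?_⟩
  · exact contDiff_const.mul (h.1.1.comp (contDiff_const_smul _))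
  · exact (h.1.2.comp_smul (inv_ne_zero hε.ne')).mul_left
  · have hn : ε ^ n ≠ 0 := (pow_pos hε n).ne'
    simp only [Colombeau.scaled]
    rw [integral_const_mul, Measure.integral_comp_inv_smul, h.2]
    simp [abs_of_pos hε, hn]

lemma contDiff_partialD {n : ℕ} (i : Fin n) {f : (Fin n → ℝ) → ℝ}
    (hf : ContDiff ℝ (⊤ : ℕ∞) f) : ContDiff ℝ (⊤ : ℕ∞) (partialD i f) :=
  (hf.fderiv_right (m := (⊤ : ℕ∞)) (by simp)).clm_apply contDiff_const

lemma contDiff_iterate_partialD {n : ℕ} (i : Fin n) (a : ℕ) {f : (Fin n → ℝ) → ℝ}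
    (hf : ContDiff ℝ (⊤ : ℕ∞) f) : ContDiff ℝ (⊤ : ℕ∞) ((partialD i)^[a] f) := by
  induction a with
  | zero => exact hf
  | succ a ih =>
    rw [Function.iterate_succ_apply']
    exact contDiff_partialD i ih

lemma partialD_comm {n : ℕ} (i j : Fin n) {f : (Fin n → ℝ) → ℝ}
    (hf : ContDiff ℝ (⊤ : ℕ∞) f) :
    partialD i (partialD j f) = partialD j (partialD i f) := by
  have hd : Differentiable ℝ (fderiv ℝ f) :=
    (hf.fderiv_right (m := (⊤ : ℕ∞)) (by simp)).differentiable (by simp)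
  have key : ∀ (a b : Fin n) (x : Fin n → ℝ), partialD a (partialD b f) x =
      fderiv ℝ (fderiv ℝ f) x (Pi.single a 1) (Pi.single b 1) := by
    intro a b x
    unfold partialD
    rw [fderiv_clm_apply (hd x) (by fun_prop)]
    simp
  funext x
  have hs : IsSymmSndFDerivAt ℝ f x := hf.contDiffAt.isSymmSndFDerivAt (by
    simpa using WithTop.coe_le_coe.2 (le_top : (2 : ℕ∞) ≤ ⊤))
  rw [key, key, hs.eq]

lemma partialD_iterate_comm {n : ℕ} (i j : Fin n) (a : ℕ) {f : (Fin n → ℝ) → ℝ}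
    (hf : ContDiff ℝ (⊤ : ℕ∞) f) :
    partialD i ((partialD j)^[a] f) = (partialD j)^[a] (partialD i f) := by
  induction a with
  | zero => rfl
  | succ a ih =>
    rw [Function.iterate_succ_apply', Function.iterate_succ_apply', ← ih,
      partialD_comm i j (contDiff_iterate_partialD j a hf)]

lemma contDiff_foldl_partialD {n : ℕ} (k : Fin n → ℕ) (l : List (Fin n))
    {f : (Fin n → ℝ) → ℝ} (hf : ContDiff ℝ (⊤ : ℕ∞) f) :
    ContDiff ℝ (⊤ : ℕ∞) (l.foldl (fun g i => (partialD i)^[k i] g) f) := by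
  induction l generalizing f with
  | nil => exact hf
  | cons j l ih => exact ih (contDiff_iterate_partialD j (k j) hf)

lemma foldl_partialD_comm {n : ℕ} (k : Fin n → ℕ) (i : Fin n) (l : List (Fin n))
    {f : (Fin n → ℝ) → ℝ} (hf : ContDiff ℝ (⊤ : ℕ∞) f) :
    l.foldl (fun g i => (partialD i)^[k i] g) (partialD i f) =
      partialD i (l.foldl (fun g i => (partialD i)^[k i] g) f) := by
  induction l generalizing f with
  | nil => rfl
  | cons j l ih =>
    simp only [List.foldl_cons]
    rw [← partialD_iterate_comm i j _ hf, ih (contDiff_iterate_partialD j _ hf)]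

lemma foldl_partialD_add_single {n : ℕ} (k : Fin n → ℕ) (i : Fin n) {l : List (Fin n)}
    (hl : l.Nodup) (hi : i ∈ l) {f : (Fin n → ℝ) → ℝ} (hf : ContDiff ℝ (⊤ : ℕ∞) f) :
    l.foldl (fun g j => (partialD j)^[(k + Pi.single i 1 : Fin n → ℕ) j] g) f =
      l.foldl (fun g j => (partialD j)^[k j] g) (partialD i f) := by
  induction l generalizing f with
  | nil => simp at hi
  | cons j l ih =>
    simp only [List.foldl_cons]
    rw [List.nodup_cons] at hl
    by_cases hij : i = j
    · subst hij
      have hstep : (k + Pi.single i 1 : Fin n → ℕ) i = k i + 1 := by simp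
      rw [hstep, Function.iterate_succ_apply]
      refine List.foldl_ext _ _ _ fun g b hb => ?_
      have hbi : b ≠ i := fun h => hl.1 (h ▸ hb)
      simp [hbi]
    · have hstep : (k + Pi.single i 1 : Fin n → ℕ) j = k j := by simp [Ne.symm hij]
      rw [hstep, ih hl.2 ((List.mem_cons.1 hi).resolve_left hij)
        (contDiff_iterate_partialD j _ hf), partialD_iterate_comm i j _ hf]

lemma contDiff_multiD {n : ℕ} (k : Fin n → ℕ) {f : (Fin n → ℝ) → ℝ}
    (hf : ContDiff ℝ (⊤ : ℕ∞) f) : ContDiff ℝ (⊤ : ℕ∞) (multiD k f) :=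
  contDiff_foldl_partialD k _ hf

lemma multiD_zero {n : ℕ} (f : (Fin n → ℝ) → ℝ) : multiD 0 f = f := by
  simp [multiD]

lemma multiD_add_single {n : ℕ} (k : Fin n → ℕ) (i : Fin n) {f : (Fin n → ℝ) → ℝ}
    (hf : ContDiff ℝ (⊤ : ℕ∞) f) :
    multiD (k + Pi.single i 1) f = partialD i (multiD k f) := by
  unfold multiD
  rw [foldl_partialD_add_single k i (List.nodup_finRange n) (List.mem_finRange i) hf,
    foldl_partialD_comm k i _ hf]

lemma hasDerivAt_add_smul_single {n : ℕ} (i : Fin n) {f : (Fin n → ℝ) → ℝ}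
    (hf : ContDiff ℝ (⊤ : ℕ∞) f) (x : Fin n → ℝ) (t : ℝ) :
    HasDerivAt (fun s : ℝ => f (x + s • Pi.single i 1))
      (partialD i f (x + t • Pi.single i 1)) t := by
  have hline : HasDerivAt (fun s : ℝ => x + s • (Pi.single i 1 : Fin n → ℝ))
      (Pi.single i 1) t := by
    simpa using ((hasDerivAt_id t).smul_const (Pi.single i 1 : Fin n → ℝ)).const_add x
  exact ((hf.differentiable (by simp)) _).hasFDerivAt.comp_hasDerivAt t hline

/-- Landau-type interpolation: a first partial derivative is controlled by the function and the
second partial derivative along a segment of length `h`. -/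
lemma abs_partialD_le {n : ℕ} (i : Fin n) {f : (Fin n → ℝ) → ℝ}
    (hf : ContDiff ℝ (⊤ : ℕ∞) f) (x : Fin n → ℝ) {h A B : ℝ} (hh : 0 < h)
    (hA : ∀ t ∈ Set.Icc 0 h, |f (x + t • Pi.single i 1)| ≤ A)
    (hB : ∀ t ∈ Set.Icc 0 h, |partialD i (partialD i f) (x + t • Pi.single i 1)| ≤ B) :
    |partialD i f x| ≤ 2 * A / h + h * B := by
  have hder := hasDerivAt_add_smul_single i hf x
  have hder2 := hasDerivAt_add_smul_single i (contDiff_partialD i hf) x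
  obtain ⟨s, hs, hs'⟩ := exists_hasDerivAt_eq_slope _ _ hh
    (fun t _ => (hder t).continuousAt.continuousWithinAt) (fun t _ => hder t)
  obtain ⟨r, hr, hr'⟩ := exists_hasDerivAt_eq_slope _ _ hs.1
    (fun t _ => (hder2 t).continuousAt.continuousWithinAt) (fun t _ => hder2 t)
  have hB' := hB r ⟨hr.1.le, (hr.2.trans hs.2).le⟩
  have hA0 := hA 0 ⟨le_rfl, hh.le⟩
  have hAh := hA h ⟨hh.le, le_rfl⟩
  rw [sub_zero, eq_div_iff hs.1.ne'] at hr'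
  have hsplit : partialD i f x = partialD i f (x + s • Pi.single i 1) -
      partialD i (partialD i f) (x + r • Pi.single i 1) * s := by
    rw [hr']; simp
  have h1 : |partialD i f (x + s • Pi.single i 1)| ≤ 2 * A / h := by
    rw [hs', sub_zero, abs_div, abs_of_pos hh]
    gcongr
    exact (abs_sub _ _).trans (by linarith)
  have h2 : |partialD i (partialD i f) (x + r • Pi.single i 1) * s| ≤ h * B := by
    rw [abs_mul, abs_of_pos hs.1, mul_comm]
    exact mul_le_mul hs.2.le hB' (abs_nonneg _) hh.le
  rw [hsplit]
  exact (abs_sub _ _).trans (add_le_add h1 h2)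

lemma add_smul_single_mem_cthickening {n : ℕ} (i : Fin n) {K : Set (Fin n → ℝ)}
    {x : Fin n → ℝ} (hx : x ∈ K) {t : ℝ} (ht : t ∈ Set.Icc (0 : ℝ) 1) :
    x + t • Pi.single i 1 ∈ Metric.cthickening 1 K := by
  refine Metric.mem_cthickening_of_dist_le _ x _ _ hx ?_
  rw [dist_self_add_left, norm_smul, Pi.norm_single, norm_one, mul_one, Real.norm_eq_abs,
    abs_of_nonneg ht.1]
  exact ht.2

/-- The negligibility estimate for the single derivative `∂^k F`. -/
def NegligibleAt (n : ℕ) (F : ((Fin n → ℝ) → ℝ) → (Fin n → ℝ) → ℝ) (k : Fin n → ℕ) : Prop :=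
  ∀ K : Set (Fin n → ℝ), IsCompact K → ∀ m : ℕ,
    ∃ q : ℕ, ∀ φ, IsAq n q φ →
      ∃ C > 0, ∀ᶠ ε in 𝓝[>] (0:ℝ), ∀ x ∈ K,
        |multiD k (F (scaled n φ ε)) x| ≤ C * ε ^ m

lemma NegligibleAt.add_single {n : ℕ} {F : ((Fin n → ℝ) → ℝ) → (Fin n → ℝ) → ℝ}
    (hFsmooth : ∀ φ, IsA0 n φ → ContDiff ℝ (⊤ : ℕ∞) (F φ)) (hF : Moderate n F)
    {k : Fin n → ℕ} (hk : NegligibleAt n F k) (i : Fin n) :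
    NegligibleAt n F (k + Pi.single i 1) := by
  intro K hK m
  obtain ⟨N, hN⟩ := hF _ (hK.cthickening (r := 1)) (k + Pi.single i 1 + Pi.single i 1)
  obtain ⟨q, hq⟩ := hk _ (hK.cthickening (r := 1)) (2 * m + N)
  refine ⟨max q N, fun φ hφ => ?_⟩
  obtain ⟨A, hA, hA'⟩ := hq φ (hφ.mono (le_max_left _ _))
  obtain ⟨B, hB, hB'⟩ := hN φ (hφ.mono (le_max_right _ _))
  refine ⟨2 * A + B, by positivity, ?_⟩
  filter_upwards [hA', hB', Ioo_mem_nhdsGT (zero_lt_one' ℝ)] with ε hεA hεB hε x hx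
  have hε0 : 0 < ε := hε.1
  have hsm := hFsmooth _ (hφ.1.scaled hε0)
  rw [multiD_add_single _ i hsm, multiD_add_single _ i hsm] at hεB
  rw [multiD_add_single _ i hsm]
  have hh1 : ε ^ (m + N) ≤ 1 := pow_le_one₀ hε0.le hε.2.le
  have hmem : ∀ t ∈ Set.Icc 0 (ε ^ (m + N)),
      x + t • Pi.single i 1 ∈ Metric.cthickening 1 K := fun t ht =>
    add_smul_single_mem_cthickening i hx ⟨ht.1, ht.2.trans hh1⟩
  refine (abs_partialD_le i (contDiff_multiD k hsm) x (pow_pos hε0 (m + N))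
    (fun t ht => hεA _ (hmem t ht)) (fun t ht => hεB _ (hmem t ht))).trans_eq ?_
  rw [zpow_neg, zpow_natCast]
  field_simp
  ring

/-- a moderate function satisfying the zeroth-order negligibility
estimates is negligible. -/
theorem negligible_of_zeroth_order (n : ℕ) (F : ((Fin n → ℝ) → ℝ) → (Fin n → ℝ) → ℝ)
    (hFsmooth : ∀ φ, IsA0 n φ → ContDiff ℝ (⊤ : ℕ∞) (F φ))
    (hF : Moderate n F)
    (h0 : ∀ K : Set (Fin n → ℝ), IsCompact K → ∀ m : ℕ,
      ∃ q : ℕ, ∀ φ, IsAq n q φ →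
        ∃ C > 0, ∀ᶠ ε in 𝓝[>] (0:ℝ), ∀ x ∈ K, |F (scaled n φ ε) x| ≤ C * ε ^ m) :
    Negligible n F := by
  suffices h : ∀ s : ℕ, ∀ k : Fin n → ℕ, ∑ j, k j = s → NegligibleAt n F k from
    fun K hK k => h _ k rfl K hK
  intro s
  induction s with
  | zero =>
    intro k hk
    obtain rfl : k = 0 := by
      funext j
      simpa using Finset.sum_eq_zero_iff.1 hk j (Finset.mem_univ j)
    simpa only [NegligibleAt, multiD_zero] using h0
  | succ s ih =>
    intro k hk
    obtain ⟨i, -, hi⟩ := Finset.exists_ne_zero_of_sum_ne_zero (hk.trans_ne s.succ_ne_zero)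
    have hle : Pi.single i 1 ≤ k := by
      intro j
      obtain rfl | hj := eq_or_ne j i
      · simpa using Nat.one_le_iff_ne_zero.2 hi
      · simp [hj]
    obtain ⟨k', rfl⟩ : ∃ k', k = k' + Pi.single i 1 :=
      ⟨k - Pi.single i 1, (tsub_add_cancel_of_le hle).symm⟩
    refine (ih k' ?_).add_single hFsmooth hF i
    simpa [Finset.sum_add_distrib] using hk

end Colombeau
end
end

section
/- Let n ∈ ℕ, let f : ℝⁿ → ℝ be smooth, let u : ℝⁿ → ℝ be locally integrable and let φ ∈ 𝒜₀(ℝⁿ). Then for every Ψ ∈ 𝒟(ℝⁿ), lim_{ε → 0⁺} ∫_{ℝⁿ} f̃(φ_ε, x) ũ(φ_ε, x) Ψ(x) dx = ∫_{ℝⁿ} f(x) u(x) Ψ(x) dx; that is, the product of the embedding of a smooth function and the embedding of the regular distribution u is associated to the embedding of the product f·u. -/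
open MeasureTheory Filter Topology

noncomputable section

namespace Colombeau

/-- Rescaling the variable against a scaled mollifier. -/
lemma integral_mul_scaled (n : ℕ) (h φ : (Fin n → ℝ) → ℝ) {ε : ℝ} (hε : 0 < ε) :
    ∫ w, h w * scaled n φ ε w = ∫ z, h (ε • z) * φ z := by
  have key := Measure.integral_comp_inv_smul_of_nonneg (volume : Measure (Fin n → ℝ))
    (fun z => h (ε • z) * φ z) hε.le
  simp only [smul_inv_smul₀ hε.ne', Module.finrank_fin_fun, smul_eq_mul] at key
  have hpow : ε ^ n ≠ 0 := pow_ne_zero n hε.ne'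
  calc ∫ w, h w * scaled n φ ε w = ∫ w, (ε ^ n)⁻¹ * (h w * φ (ε⁻¹ • w)) := by
        congr 1 with w
        simp only [scaled]
        ring
    _ = ∫ z, h (ε • z) * φ z := by
        rw [integral_const_mul, key, inv_mul_cancel_left₀ hpow]

lemma integral_mul_scaled_sub_right (n : ℕ) (h φ : (Fin n → ℝ) → ℝ) {ε : ℝ} (hε : 0 < ε)
    (x : Fin n → ℝ) :
    ∫ y, h y * scaled n φ ε (y - x) = ∫ z, h (x + ε • z) * φ z := by
  rw [← integral_mul_scaled n (fun w => h (x + w)) φ hε,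
    ← integral_sub_right_eq_self (fun w => h (x + w) * scaled n φ ε w) x]
  simp

lemma integral_mul_scaled_sub_left (n : ℕ) (h φ : (Fin n → ℝ) → ℝ) {ε : ℝ} (hε : 0 < ε)
    (y : Fin n → ℝ) :
    ∫ x, h x * scaled n φ ε (y - x) = ∫ z, h (y - ε • z) * φ z := by
  rw [← integral_mul_scaled n (fun w => h (y - w)) φ hε,
    ← integral_sub_left_eq_self (fun w => h (y - w) * scaled n φ ε w) volume y]
  simp

/-- Integrating a jointly continuous function against a test function gives a continuous function
of the parameter. -/
lemma continuous_integral_mul_testFunction {X : Type*} [TopologicalSpace X]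
    [FirstCountableTopology X] [LocallyCompactSpace X] {n : ℕ} {φ : (Fin n → ℝ) → ℝ}
    (hφ : IsTestFunction n φ) {h : X → (Fin n → ℝ) → ℝ} (hh : Continuous (Function.uncurry h)) :
    Continuous fun p => ∫ z, h p z * φ z := by
  have hc : Continuous (Function.uncurry fun p z => h p z * φ z) :=
    hh.mul (hφ.1.continuous.comp continuous_snd)
  have key := continuous_parametric_integral_of_continuous (μ := volume) hc hφ.2.isCompact
  convert key using 2 with p
  refine (setIntegral_eq_integral_of_forall_compl_eq_zero fun z hz => ?_).symm
  rw [image_eq_zero_of_notMem_tsupport hz, mul_zero]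

lemma continuous_scaled {n : ℕ} {φ : (Fin n → ℝ) → ℝ} (hφ : Continuous φ) (ε : ℝ) :
    Continuous (scaled n φ ε) := by
  unfold scaled
  fun_prop

/-- The points reachable from `K` by a displacement `ε • z`, with `0 ≤ ε ≤ 1` and `z ∈ S`. -/
def thickening {n : ℕ} (K S : Set (Fin n → ℝ)) : Set (Fin n → ℝ) :=
  (fun p : (Fin n → ℝ) × ℝ × (Fin n → ℝ) => p.1 + p.2.1 • p.2.2) '' (K ×ˢ Set.Icc 0 1 ×ˢ S)

lemma isCompact_thickening {n : ℕ} {K S : Set (Fin n → ℝ)} (hK : IsCompact K)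
    (hS : IsCompact S) : IsCompact (thickening K S) :=
  (hK.prod (isCompact_Icc.prod hS)).image (by fun_prop)

lemma mem_thickening {n : ℕ} {K S : Set (Fin n → ℝ)} {y z : Fin n → ℝ} {ε : ℝ}
    (hε : ε ∈ Set.Icc (0 : ℝ) 1) (hz : z ∈ S) (hy : y - ε • z ∈ K) : y ∈ thickening K S :=
  ⟨(y - ε • z, ε, z), ⟨hy, hε, hz⟩, by simp⟩

lemma mul_scaled_sub_eq_zero {n : ℕ} {g φ : (Fin n → ℝ) → ℝ} {K : Set (Fin n → ℝ)}
    (hg : ∀ x ∉ K, g x = 0) {ε : ℝ} (hε : 0 < ε) (hε1 : ε ≤ 1) {y : Fin n → ℝ}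
    (hy : y ∉ thickening K (tsupport φ)) (x : Fin n → ℝ) :
    g x * scaled n φ ε (y - x) = 0 := by
  by_cases hx : x ∈ K
  · by_cases hz : ε⁻¹ • (y - x) ∈ tsupport φ
    · refine absurd (mem_thickening ⟨hε.le, hε1⟩ hz ?_) hy
      rwa [smul_inv_smul₀ hε.ne', sub_sub_cancel]
    · rw [scaled, image_eq_zero_of_notMem_tsupport hz, mul_zero, mul_zero]
  · rw [hg x hx, zero_mul]

/-- Moving the mollifier from a locally integrable function to a compactly supported continuous
one. -/
lemma integral_mul_integral_scaled_swap {n : ℕ} {u g φ : (Fin n → ℝ) → ℝ}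
    (hu : LocallyIntegrable u) (hφ : IsTestFunction n φ) (hg : Continuous g)
    {K : Set (Fin n → ℝ)} (hK : IsCompact K) (hgK : ∀ x ∉ K, g x = 0)
    {ε : ℝ} (hε : 0 < ε) (hε1 : ε ≤ 1) :
    ∫ x, g x * ∫ y, u y * scaled n φ ε (y - x) =
      ∫ y, u y * ∫ x, g x * scaled n φ ε (y - x) := by
  set L := thickening K (tsupport φ) with hL
  have hLc : IsCompact L := isCompact_thickening hK hφ.2.isCompact
  have hgi : Integrable g :=
    hg.integrable_of_hasCompactSupport (HasCompactSupport.intro hK hgK)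
  have hui : Integrable (L.indicator u) :=
    (hu.integrableOn_isCompact hLc).integrable_indicator hLc.measurableSet
  obtain ⟨C, hC⟩ := hφ.2.exists_bound_of_continuous hφ.1.continuous
  have hint : Integrable (Function.uncurry fun x y => g x * (u y * scaled n φ ε (y - x)))
      (volume.prod volume) := by
    have hs : Continuous fun p : (Fin n → ℝ) × (Fin n → ℝ) => scaled n φ ε (p.2 - p.1) :=
      (continuous_scaled hφ.1.continuous ε).comp (continuous_snd.sub continuous_fst)
    have := (hgi.mul_prod hui).bdd_mul (c := (ε ^ n)⁻¹ * C) hs.aestronglyMeasurable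
      (ae_of_all _ fun p => by
        rw [scaled, norm_mul, Real.norm_of_nonneg (by positivity)]
        exact mul_le_mul_of_nonneg_left (hC _) (by positivity))
    refine this.congr (ae_of_all _ fun p => ?_)
    simp only [Function.uncurry]
    by_cases hy : p.2 ∈ L
    · rw [Set.indicator_of_mem hy]
      ring
    · rw [Set.indicator_of_notMem hy]
      linear_combination (-u p.2) * mul_scaled_sub_eq_zero hgK hε hε1 hy p.1
  simp only [← integral_const_mul]
  rw [integral_integral_swap hint]
  congr 1 with y
  congr 1 with x
  ring

/-- the product of the embedding of a smooth function and the embedding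
of a regular distribution is associated to the embedding of their product. -/
theorem smooth_times_distribution_associated (n : ℕ) (f u : (Fin n → ℝ) → ℝ)
    (hf : ContDiff ℝ (⊤ : ℕ∞) f) (hu : LocallyIntegrable u)
    (φ : (Fin n → ℝ) → ℝ) (hφ : IsA0 n φ)
    (Ψ : (Fin n → ℝ) → ℝ) (hΨ : IsTestFunction n Ψ) :
    Tendsto (fun ε : ℝ => ∫ x, (∫ y, f y * scaled n φ ε (y - x)) *
        (∫ y, u y * scaled n φ ε (y - x)) * Ψ x)
      (𝓝[>] 0) (𝓝 (∫ x, f x * u x * Ψ x)) := by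
  set F : ℝ × (Fin n → ℝ) → ℝ := fun p => ∫ z, f (p.2 + p.1 • z) * φ z with hF
  have hFc : Continuous F :=
    continuous_integral_mul_testFunction (h := fun (p : ℝ × (Fin n → ℝ)) z => f (p.2 + p.1 • z))
      hφ.1 (hf.continuous.comp (by fun_prop))
  set G : ℝ × (Fin n → ℝ) → ℝ :=
    fun p => ∫ z, F (p.1, p.2 - p.1 • z) * Ψ (p.2 - p.1 • z) * φ z with hG
  have hGc : Continuous G :=
    continuous_integral_mul_testFunction
      (h := fun (p : ℝ × (Fin n → ℝ)) z => F (p.1, p.2 - p.1 • z) * Ψ (p.2 - p.1 • z)) hφ.1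
      ((hFc.comp (by fun_prop)).mul (hΨ.1.continuous.comp (by fun_prop)))
  have hG0 (y : Fin n → ℝ) : G (0, y) = f y * Ψ y := by
    simp [hG, hF, integral_const_mul, hφ.2]
  have hΨ0 : ∀ x ∉ tsupport Ψ, Ψ x = 0 := fun x hx => image_eq_zero_of_notMem_tsupport hx
  set L := thickening (tsupport Ψ) (tsupport φ) with hL
  have hLc : IsCompact L := isCompact_thickening hΨ.2.isCompact hφ.1.2.isCompact
  have hG_supp {ε : ℝ} (hε : ε ∈ Set.Icc (0 : ℝ) 1) {y : Fin n → ℝ} (hy : y ∉ L) :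
      G (ε, y) = 0 := by
    refine integral_eq_zero_of_ae (ae_of_all _ fun z => ?_)
    by_cases hz : z ∈ tsupport φ
    · have : y - ε • z ∉ tsupport Ψ := fun h => hy (mem_thickening hε hz h)
      simp [hΨ0 _ this]
    · simp [image_eq_zero_of_notMem_tsupport hz]
  obtain ⟨C, hC⟩ := ((isCompact_Icc (a := (0 : ℝ)) (b := 1)).prod hLc).exists_bound_of_continuousOn
    hGc.continuousOn
  have hIoc : ∀ᶠ ε in 𝓝[>] (0 : ℝ), ε ∈ Set.Ioc (0 : ℝ) 1 := Ioc_mem_nhdsGT one_pos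
  have hlim : Tendsto (fun ε : ℝ => ∫ y, u y * G (ε, y)) (𝓝[>] 0)
      (𝓝 (∫ x, f x * u x * Ψ x)) := by
    refine tendsto_integral_filter_of_dominated_convergence
      (L.indicator fun y => ‖u y‖ * C) ?_ ?_ ?_ ?_
    · exact Eventually.of_forall fun ε => hu.aestronglyMeasurable.mul
        (hGc.comp (by fun_prop : Continuous fun y => (ε, y))).aestronglyMeasurable
    · filter_upwards [hIoc] with ε hε
      refine ae_of_all _ fun y => ?_
      by_cases hy : y ∈ L
      · rw [Set.indicator_of_mem hy, norm_mul]
        exact mul_le_mul_of_nonneg_left (hC (ε, y) ⟨⟨hε.1.le, hε.2⟩, hy⟩) (norm_nonneg _)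
      · simp [Set.indicator_of_notMem hy, hG_supp ⟨hε.1.le, hε.2⟩ hy]
    · exact IntegrableOn.integrable_indicator
        ((hu.integrableOn_isCompact hLc).norm.mul_const C) hLc.measurableSet
    · refine ae_of_all _ fun y => ?_
      have h1 : Tendsto (fun ε : ℝ => G (ε, y)) (𝓝[>] 0) (𝓝 (G (0, y))) :=
        ((hGc.comp (by fun_prop : Continuous fun ε : ℝ => (ε, y))).tendsto 0).mono_left
          nhdsWithin_le_nhds
      rw [hG0] at h1
      convert h1.const_mul (u y) using 2
      ring
  refine hlim.congr' ?_
  filter_upwards [hIoc] with ε hε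
  have hswap := integral_mul_integral_scaled_swap (g := fun x => F (ε, x) * Ψ x) hu hφ.1
    ((hFc.comp (by fun_prop)).mul hΨ.1.continuous) hΨ.2.isCompact
    (fun x hx => by rw [hΨ0 x hx, mul_zero]) hε.1 hε.2
  calc ∫ y, u y * G (ε, y)
      = ∫ y, u y * ∫ x, F (ε, x) * Ψ x * scaled n φ ε (y - x) := by
        congr 1 with y
        rw [integral_mul_scaled_sub_left n (fun x => F (ε, x) * Ψ x) φ hε.1]
    _ = ∫ x, F (ε, x) * Ψ x * ∫ y, u y * scaled n φ ε (y - x) := hswap.symm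
    _ = _ := by
        congr 1 with x
        rw [integral_mul_scaled_sub_right n f φ hε.1]
        ring

end Colombeau
end
end
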